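/- Let u be a pair potential that is locally stable with constant B ≥ 0 and regular, let Λ ⊂ ℝ^d be bounded and measurable, and assume Ξ_Λ(z) ≠ 0 for all |z| < z₀. Let z ∈ ℝ with 0 < z < z₀, let k ≥ 0 and y_1,…,y_k ∈ Λ be such that θ_Λ^{(k)}(z; y_1,…,y_k) ≠ 0 (with θ_Λ^{(0)} := 1). Then for every n ≥ 1 and all x_1,…,x_n ∈ Λ, | θ_Λ^{(n+k)}(z; x_1,…,x_n, y_1,…,y_k) / θ_Λ^{(k)}(z; y_1,…,y_k) | ≤ z^n e^{2βBn}. -/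

import Mathlib

open MeasureTheory Bornology

noncomputable section

/-- Boltzmann factor `e^{-β t}` with the convention `e^{-β(+∞)} = 0`. -/
def boltz (β : ℝ) (t : EReal) : ℝ :=
  if t = ⊤ then 0 else Real.exp (-β * t.toReal)

/-- Hamiltonian of a pair potential: `H(x₁,…,xₙ) = ∑_{i<j} u(xᵢ - xⱼ)`. -/
def Ham {d : ℕ} (u : (Fin d → ℝ) → EReal) (n : ℕ) (x : Fin n → (Fin d → ℝ)) : EReal :=
  ∑ p ∈ Finset.univ.filter (fun p : Fin n × Fin n => p.1 < p.2), u (x p.1 - x p.2)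

/-- A pair potential: even, measurable, bounded from below. -/
def IsPairPotential {d : ℕ} (u : (Fin d → ℝ) → EReal) : Prop :=
  Measurable u ∧ (∀ x, u (-x) = u x) ∧ ∃ m : ℝ, ∀ x, (m : EReal) ≤ u x

/-- Stability with constant `B`: `H(x₁,…,xₙ) ≥ -Bn`. -/
def IsStable {d : ℕ} (u : (Fin d → ℝ) → EReal) (B : ℝ) : Prop :=
  ∀ (n : ℕ) (x : Fin n → (Fin d → ℝ)), ((-(B * n) : ℝ) : EReal) ≤ Ham u n x

/-- Mayer function `f_β = e^{-βu} - 1`. -/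
def mayer {d : ℕ} (β : ℝ) (u : (Fin d → ℝ) → EReal) (x : Fin d → ℝ) : ℝ :=
  boltz β (u x) - 1

/-- Regularity: the Mayer function is integrable. -/
def IsRegularPP {d : ℕ} (β : ℝ) (u : (Fin d → ℝ) → EReal) : Prop :=
  Integrable (mayer β u)

/-- `C_β(u) = ∫ |e^{-βu} - 1|`. -/
def Creg {d : ℕ} (β : ℝ) (u : (Fin d → ℝ) → EReal) : ℝ :=
  ∫ x, |mayer β u x|

/-- The cartesian power `Λ^k`. -/
def cube {d : ℕ} (Λ : Set (Fin d → ℝ)) (k : ℕ) : Set (Fin k → (Fin d → ℝ)) :=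
  Set.univ.pi fun _ => Λ

/-- Grand canonical partition function `Ξ_Λ(z)`. -/
def Xi {d : ℕ} (β : ℝ) (u : (Fin d → ℝ) → EReal) (Λ : Set (Fin d → ℝ)) (z : ℂ) : ℂ :=
  ∑' k : ℕ, z ^ k / (Nat.factorial k : ℂ) *
    ((∫ y in cube Λ k, boltz β (Ham u k y) : ℝ) : ℂ)

/-- `θ_Λ^{(n)}(z; x₁,…,xₙ)`. -/
def theta {d : ℕ} (β : ℝ) (u : (Fin d → ℝ) → EReal) (Λ : Set (Fin d → ℝ)) (n : ℕ)
    (z : ℂ) (x : Fin n → (Fin d → ℝ)) : ℂ :=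
  (Xi β u Λ z)⁻¹ * ∑' k : ℕ, z ^ (n + k) / (Nat.factorial k : ℂ) *
    ((∫ y in cube Λ k, boltz β (Ham u (n + k) (Fin.append x y)) : ℝ) : ℂ)

end

/-- Local stability with constant `B`: `Σ_i u(x_i - x) ≥ -2B` for all finite
configurations and all points `x`. -/
def IsLocallyStable {d : ℕ} (u : (Fin d → ℝ) → EReal) (B : ℝ) : Prop :=
  ∀ (n : ℕ) (x : Fin n → (Fin d → ℝ)) (y : Fin d → ℝ), 1 ≤ n →
    ((-(2 * B) : ℝ) : EReal) ≤ ∑ i, u (x i - y)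

noncomputable section

/-- Boltzmann weight of a list of points. -/
def WL {d : ℕ} (β : ℝ) (u : (Fin d → ℝ) → EReal) : List (Fin d → ℝ) → ℝ
  | [] => 1
  | a :: l => (l.map fun b => boltz β (u (a - b))).prod * WL β u l

end

lemma boltz_nonneg (β : ℝ) (t : EReal) : 0 ≤ boltz β t := by
  unfold boltz; split_ifs
  · exact le_rfl
  · positivity

lemma boltz_zero (β : ℝ) : boltz β 0 = 1 := by
  simp [boltz]

lemma boltz_add (β : ℝ) (s t : EReal) (hs : s ≠ ⊥) (ht : t ≠ ⊥) :
    boltz β (s + t) = boltz β s * boltz β t := by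
  induction s with
  | bot => exact absurd rfl hs
  | top => simp [boltz, EReal.top_add_of_ne_bot ht]
  | coe s =>
    induction t with
    | bot => exact absurd rfl ht
    | top => simp [boltz]
    | coe t =>
      have h : (s : EReal) + t ≠ ⊤ := by
        rw [← EReal.coe_add]; exact EReal.coe_ne_top _
      unfold boltz
      rw [if_neg h, if_neg (EReal.coe_ne_top _), if_neg (EReal.coe_ne_top _), ← EReal.coe_add,
        EReal.toReal_coe, EReal.toReal_coe, EReal.toReal_coe, ← Real.exp_add]
      congr 1; ring

lemma boltz_sum {ι : Type*} (β : ℝ) (s : Finset ι) (f : ι → EReal) (hf : ∀ i, f i ≠ ⊥) :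
    boltz β (∑ i ∈ s, f i) = ∏ i ∈ s, boltz β (f i) ∧ ∑ i ∈ s, f i ≠ ⊥ := by
  classical
  induction s using Finset.induction_on with
  | empty => simp [boltz_zero]
  | insert a s ha ih =>
    rw [Finset.sum_insert ha, Finset.prod_insert ha, boltz_add β _ _ (hf a) ih.2, ih.1]
    refine ⟨rfl, ?_⟩
    rw [Ne, EReal.add_eq_bot_iff]
    simp [hf a, ih.2]

lemma boltz_le (β : ℝ) (hβ : 0 < β) (c : ℝ) (t : EReal) (h : ((-c : ℝ) : EReal) ≤ t) :
    boltz β t ≤ Real.exp (β * c) := by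
  induction t with
  | bot => simp at h
  | top => simp [boltz]; positivity
  | coe t =>
    unfold boltz
    rw [if_neg (EReal.coe_ne_top _), EReal.toReal_coe]
    apply Real.exp_le_exp.2
    have : -c ≤ t := EReal.coe_le_coe_iff.1 h
    nlinarith

lemma boltz_measurable (β : ℝ) : Measurable (boltz β) := by
  unfold boltz
  refine Measurable.ite (measurableSet_singleton _) measurable_const ?_
  exact Real.measurable_exp.comp (measurable_ereal_toReal.const_mul _)

lemma ne_bot_of_pp {d : ℕ} {u : (Fin d → ℝ) → EReal} (hu : IsPairPotential u) (x) :
    u x ≠ ⊥ := by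
  obtain ⟨m, hm⟩ := hu.2.2
  intro h
  have := hm x
  rw [h] at this
  simp at this

lemma boltz_Ham {d : ℕ} (β : ℝ) {u : (Fin d → ℝ) → EReal} (hu : IsPairPotential u) (n : ℕ)
    (x : Fin n → (Fin d → ℝ)) :
    boltz β (Ham u n x) =
      ∏ i : Fin n, ∏ j : Fin n, if i < j then boltz β (u (x i - x j)) else 1 := by
  unfold Ham
  rw [(boltz_sum β _ _ (fun p => ne_bot_of_pp hu _)).1, Finset.prod_filter,
    ← Finset.univ_product_univ, Finset.prod_product]

lemma boltz_Ham_WL {d : ℕ} (β : ℝ) {u : (Fin d → ℝ) → EReal} (hu : IsPairPotential u) (n : ℕ)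
    (x : Fin n → (Fin d → ℝ)) :
    boltz β (Ham u n x) = WL β u (List.ofFn x) := by
  rw [boltz_Ham β hu]
  induction n with
  | zero => simp [WL]
  | succ n ih =>
    rw [List.ofFn_succ, WL, ← ih (fun i => x i.succ), Fin.prod_univ_succ]
    congr 1
    · rw [Fin.prod_univ_succ, List.map_ofFn, List.prod_ofFn]
      simp
    · apply Finset.prod_congr rfl
      intro i _
      rw [Fin.prod_univ_succ]
      simp

lemma WL_nonneg {d : ℕ} (β : ℝ) (u : (Fin d → ℝ) → EReal) (l : List (Fin d → ℝ)) :
    0 ≤ WL β u l := by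
  induction l with
  | nil => simp [WL]
  | cons a l ih =>
    rw [WL]
    refine mul_nonneg (List.prod_nonneg ?_) ih
    intro b hb
    obtain ⟨c, _, rfl⟩ := List.mem_map.1 hb
    exact boltz_nonneg _ _

lemma one_point {d : ℕ} {β B : ℝ} (hβ : 0 < β) (hB : 0 ≤ B) {u : (Fin d → ℝ) → EReal}
    (hu : IsPairPotential u) (hls : IsLocallyStable u B) (a : Fin d → ℝ)
    (l : List (Fin d → ℝ)) :
    (l.map fun b => boltz β (u (a - b))).prod ≤ Real.exp (2 * β * B) := by
  obtain ⟨n, x, rfl⟩ : ∃ (n : ℕ) (x : Fin n → (Fin d → ℝ)), l = List.ofFn x :=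
    ⟨l.length, l.get, (List.ofFn_get l).symm⟩
  rw [List.map_ofFn, List.prod_ofFn]
  rcases Nat.eq_zero_or_pos n with rfl | hn
  · simp; positivity
  · have h := hls n x a hn
    have h2 := boltz_le β hβ _ _ h
    rw [(boltz_sum β _ _ (fun p => ne_bot_of_pp hu _)).1] at h2
    have e : ∀ i, u (a - x i) = u (x i - a) := fun i => by
      rw [← hu.2.1 (x i - a), neg_sub]
    simp only [Function.comp, e]
    refine h2.trans_eq ?_
    congr 1; ring

lemma WL_append {d : ℕ} {β B : ℝ} (hβ : 0 < β) (hB : 0 ≤ B) {u : (Fin d → ℝ) → EReal}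
    (hu : IsPairPotential u) (hls : IsLocallyStable u B) (l m : List (Fin d → ℝ)) :
    WL β u (l ++ m) ≤ Real.exp (2 * β * B * l.length) * WL β u m := by
  induction l with
  | nil => simp
  | cons a l ih =>
    rw [List.cons_append, WL]
    have h1 := one_point hβ hB hu hls a (l ++ m)
    calc _ ≤ Real.exp (2 * β * B) * (Real.exp (2 * β * B * l.length) * WL β u m) :=
          mul_le_mul h1 ih (WL_nonneg _ _ _) (by positivity)
      _ = _ := by
          rw [← mul_assoc, ← Real.exp_add]
          congr 2
          push_cast [List.length_cons]; ring

lemma W_int {d : ℕ} {β B : ℝ} (hβ : 0 < β) (hB : 0 ≤ B) {u : (Fin d → ℝ) → EReal}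
    (hu : IsPairPotential u) (hls : IsLocallyStable u B)
    (Λ : Set (Fin d → ℝ)) (hΛb : IsBounded Λ)
    (n : ℕ) (x : Fin n → (Fin d → ℝ)) (j : ℕ) :
    IntegrableOn (fun w : Fin j → (Fin d → ℝ) => boltz β (Ham u (n + j) (Fin.append x w)))
      (cube Λ j) ∧
    ∫ w in cube Λ j, boltz β (Ham u (n + j) (Fin.append x w)) ≤
      Real.exp (2 * β * B * (n + j : ℕ)) * (volume Λ).toReal ^ j := by
  have hvol : volume (cube Λ j) = volume Λ ^ j := by
    simp [cube, volume_pi_pi]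
  have hfin : volume (cube Λ j) < ⊤ := by
    rw [hvol]; exact ENNReal.pow_lt_top hΛb.measure_lt_top
  have hle : ∀ w : Fin j → (Fin d → ℝ), boltz β (Ham u (n + j) (Fin.append x w)) ≤
      Real.exp (2 * β * B * (n + j : ℕ)) := by
    intro w
    rw [boltz_Ham_WL β hu]
    have := WL_append hβ hB hu hls (List.ofFn (Fin.append x w)) []
    simpa [WL] using this
  have hmeas : Measurable
      (fun w : Fin j → (Fin d → ℝ) => boltz β (Ham u (n + j) (Fin.append x w))) := by
    simp only [boltz_Ham β hu]
    have hap : ∀ i, Measurable (fun w : Fin j → (Fin d → ℝ) => Fin.append x w i) := by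
      intro i
      refine Fin.addCases (fun i => ?_) (fun i => ?_) i
      · simp only [Fin.append_left]; exact measurable_const
      · simp only [Fin.append_right]; exact measurable_pi_apply i
    refine Finset.measurable_prod _ fun a _ => Finset.measurable_prod _ fun b _ => ?_
    split_ifs
    · exact (boltz_measurable β).comp (hu.1.comp ((hap a).sub (hap b)))
    · exact measurable_const
  have hb : ∀ w : Fin j → (Fin d → ℝ), ‖boltz β (Ham u (n + j) (Fin.append x w))‖ ≤
      Real.exp (2 * β * B * (n + j : ℕ)) := fun w => by
    rw [Real.norm_of_nonneg (boltz_nonneg _ _)]; exact hle w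
  refine ⟨?_, ?_⟩
  · exact Measure.integrableOn_of_bounded hfin.ne hmeas.aestronglyMeasurable
      (Filter.Eventually.of_forall hb)
  · have := norm_setIntegral_le_of_norm_le_const (μ := volume) hfin (fun w _ => hb w)
    refine (le_abs_self _).trans (this.trans_eq ?_)
    rw [Measure.real, hvol, ENNReal.toReal_pow]

lemma theta_eq {d : ℕ} (β : ℝ) (u : (Fin d → ℝ) → EReal) (Λ : Set (Fin d → ℝ)) (n : ℕ)
    (z : ℝ) (x : Fin n → (Fin d → ℝ)) :
    theta β u Λ n (z : ℂ) x = (Xi β u Λ z)⁻¹ * ((∑' j : ℕ, z ^ (n + j) / (Nat.factorial j : ℝ) *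
      (∫ y in cube Λ j, boltz β (Ham u (n + j) (Fin.append x y))) : ℝ) : ℂ) := by
  rw [theta, Complex.ofReal_tsum]
  push_cast
  rfl

lemma W_summable {d : ℕ} {β B : ℝ} (hβ : 0 < β) (hB : 0 ≤ B) {u : (Fin d → ℝ) → EReal}
    (hu : IsPairPotential u) (hls : IsLocallyStable u B)
    (Λ : Set (Fin d → ℝ)) (hΛb : IsBounded Λ) (z : ℝ) (hz : 0 < z)
    (n : ℕ) (x : Fin n → (Fin d → ℝ)) :
    Summable (fun j : ℕ => z ^ (n + j) / (Nat.factorial j : ℝ) *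
      (∫ y in cube Λ j, boltz β (Ham u (n + j) (Fin.append x y)))) := by
  have hs := (Real.summable_pow_div_factorial
    (z * Real.exp (2 * β * B) * (volume Λ).toReal)).mul_left (z ^ n * Real.exp (2 * β * B * n))
  refine Summable.of_nonneg_of_le (fun j => ?_) (fun j => ?_) hs
  · exact mul_nonneg (by positivity) (integral_nonneg fun _ => boltz_nonneg _ _)
  · refine (mul_le_mul_of_nonneg_left (W_int hβ hB hu hls Λ hΛb n x j).2
      (by positivity)).trans_eq ?_
    have : Real.exp (2 * β * B * (n + j : ℕ)) =
        Real.exp (2 * β * B * n) * Real.exp (2 * β * B) ^ j := by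
      rw [← Real.exp_nat_mul, ← Real.exp_add]; congr 1; push_cast; ring
    rw [this, mul_pow, mul_pow, pow_add]
    ring

/-- for a locally stable and regular pair potential and real
`0 < z < z₀`, whenever `θ_Λ^{(k)}(z;y) ≠ 0` (with `θ_Λ^{(0)} := 1`, i.e. `k = 0`
allowed via the empty tuple) one has
`|θ_Λ^{(n+k)}(z;x,y)/θ_Λ^{(k)}(z;y)| ≤ zⁿ e^{2βBn}`. -/
theorem statement13 {d : ℕ} (hd : 1 ≤ d) (β B : ℝ) (hβ : 0 < β) (hB : 0 ≤ B)
    (u : (Fin d → ℝ) → EReal) (hu : IsPairPotential u)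
    (hls : IsLocallyStable u B) (hreg : IsRegularPP β u)
    (Λ : Set (Fin d → ℝ)) (hΛb : IsBounded Λ) (hΛm : MeasurableSet Λ)
    (hXi : ∀ w : ℂ, ‖w‖ * (Real.exp (2 * β * B + 1) * Creg β u) < 1 →
      Xi β u Λ w ≠ 0)
    (z : ℝ) (hz0 : 0 < z) (hz : z * (Real.exp (2 * β * B + 1) * Creg β u) < 1)
    (k : ℕ) (y : Fin k → (Fin d → ℝ)) (hy : ∀ j, y j ∈ Λ)
    (hθk : theta β u Λ k (z : ℂ) y ≠ 0)
    (n : ℕ) (hn : 1 ≤ n) (x : Fin n → (Fin d → ℝ)) (hx : ∀ i, x i ∈ Λ) :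
    ‖theta β u Λ (n + k) (z : ℂ) (Fin.append x y) / theta β u Λ k (z : ℂ) y‖
      ≤ z ^ n * Real.exp (2 * β * B * n) := by
  have hterm : ∀ j : ℕ, z ^ (n + k + j) / (Nat.factorial j : ℝ) *
      (∫ w in cube Λ j, boltz β (Ham u (n + k + j) (Fin.append (Fin.append x y) w))) ≤
      (z ^ n * Real.exp (2 * β * B * n)) * (z ^ (k + j) / (Nat.factorial j : ℝ) *
      (∫ w in cube Λ j, boltz β (Ham u (k + j) (Fin.append y w)))) := by
    intro j
    have h1 : (∫ w in cube Λ j, boltz β (Ham u (n + k + j) (Fin.append (Fin.append x y) w))) ≤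
        ∫ w in cube Λ j, Real.exp (2 * β * B * n) * boltz β (Ham u (k + j) (Fin.append y w)) := by
      refine integral_mono (W_int hβ hB hu hls Λ hΛb (n + k) (Fin.append x y) j).1
        ((W_int hβ hB hu hls Λ hΛb k y j).1.const_mul _) fun w => ?_
      simp only [boltz_Ham_WL β hu, List.ofFn_fin_append, List.append_assoc]
      have := WL_append hβ hB hu hls (List.ofFn x) (List.ofFn y ++ List.ofFn w)
      simpa using this
    rw [integral_const_mul] at h1
    refine (mul_le_mul_of_nonneg_left h1 (by positivity)).trans_eq ?_
    rw [add_assoc, pow_add]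
    ring
  have hS := Summable.tsum_le_tsum hterm
    (W_summable hβ hB hu hls Λ hΛb z hz0 (n + k) (Fin.append x y))
    ((W_summable hβ hB hu hls Λ hΛb z hz0 k y).mul_left _)
  rw [tsum_mul_left] at hS
  have hnn : ∀ (m : ℕ) (v : Fin m → (Fin d → ℝ)),
      0 ≤ ∑' j : ℕ, z ^ (m + j) / (Nat.factorial j : ℝ) *
      (∫ w in cube Λ j, boltz β (Ham u (m + j) (Fin.append v w))) := fun m v =>
    tsum_nonneg fun j => mul_nonneg (by positivity) (integral_nonneg fun _ => boltz_nonneg _ _)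
  rw [norm_div, div_le_iff₀ (norm_pos_iff.2 hθk), theta_eq, theta_eq, norm_mul, norm_mul,
    Complex.norm_real, Complex.norm_real, Real.norm_of_nonneg (hnn _ _),
    Real.norm_of_nonneg (hnn _ _)]
  refine (mul_le_mul_of_nonneg_left hS (norm_nonneg _)).trans_eq ?_
  ring
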